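/- Let Z be a standard normal random variable and q ∈ [2,∞). Then for every λ ≥ 0, ‖e^{λZ − λ²/2} − 1‖_{L^q} ≤ √(2 log 2) · √(q−1) · λ · e^{(q−1)λ²}. -/

import Mathlib

open MeasureTheory ProbabilityTheory Filter Set ENNReal Asymptotics
open scoped NNReal Classical Topology

noncomputable section

/-!
The process `M s = exp (s Z - s² / 2)` satisfies `M 0 = 1` and `M' s = M s * (Z - s)`, so
Minkowski's integral inequality bounds `‖M l - 1‖` by the integral over `(0, l]` of
`‖M s * (Z - s)‖` (norms in `L^q`). Exponential tilting turns the law of `Z` under the weight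
`exp (q s Z)` into `N(q s, 1)`, and centered Gaussians satisfy `‖Z‖ ≤ √(q - 1)`, whence
`‖M s * (Z - s)‖ ≤ exp ((q - 1) s² / 2) * (√(q - 1) + (q - 1) s)`.
An elementary inequality bounds the right-hand side by the derivative in `s` of
`√(2 log 2) √(q - 1) s exp ((q - 1) s²)`.
-/

section MinkowskiIntegral

variable {α β E : Type*} [MeasurableSpace α] [MeasurableSpace β] [NormedAddCommGroup E]
  {μ : Measure α} {ν : Measure β} {q : ℝ}

lemma rpow_lintegral_le_lintegral_rpow_mul_rpow {f k : β → ℝ≥0∞} (hf : AEMeasurable f ν)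
    (hk : AEMeasurable k ν) (hk_zero : ∀ᵐ y ∂ν, k y ≠ 0) (hk_top : ∀ᵐ y ∂ν, k y ≠ ∞)
    (hq : 1 ≤ q) :
    (∫⁻ y, f y ∂ν) ^ q ≤ (∫⁻ y, f y ^ q * k y ^ (1 - q) ∂ν) * (∫⁻ y, k y ∂ν) ^ (q - 1) := by
  have hq_pos : 0 < q := by linarith
  -- Jensen's inequality for `f / k` and the measure `k ν`.
  have jensen := eLpNorm'_le_eLpNorm'_mul_rpow_measure_univ one_pos hq
    (f := fun y ↦ f y * (k y)⁻¹) (μ := ν.withDensity k)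
    ((hf.mul hk.inv).mono_ac (withDensity_absolutelyContinuous ν k)).aestronglyMeasurable
  have lintegral_quotient {p : ℝ} (hp : 0 ≤ p) :
      ∫⁻ y, (f y * (k y)⁻¹) ^ p ∂ν.withDensity k = ∫⁻ y, f y ^ p * k y ^ (1 - p) ∂ν := by
    rw [lintegral_withDensity_eq_lintegral_mul_non_measurable₀ ν hk
      (hk_top.mono fun _ h ↦ h.lt_top)]
    refine lintegral_congr_ae ?_
    filter_upwards [hk_zero, hk_top] with y hy_zero hy_top
    rw [Pi.mul_apply, ENNReal.mul_rpow_of_nonneg _ _ hp, ENNReal.inv_rpow,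
      ENNReal.rpow_sub _ _ hy_zero hy_top, ENNReal.rpow_one, div_eq_mul_inv, mul_left_comm]
  simp only [eLpNorm', enorm_eq_self, lintegral_quotient zero_le_one,
    lintegral_quotient hq_pos.le, withDensity_apply _ MeasurableSet.univ,
    Measure.restrict_univ] at jensen
  simp only [ENNReal.rpow_one, sub_self, ENNReal.rpow_zero, mul_one, one_div_one] at jensen
  calc (∫⁻ y, f y ∂ν) ^ q
      ≤ ((∫⁻ y, f y ^ q * k y ^ (1 - q) ∂ν) ^ (1 / q) * (∫⁻ y, k y ∂ν) ^ (1 - 1 / q)) ^ q := by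
        gcongr
    _ = (∫⁻ y, f y ^ q * k y ^ (1 - q) ∂ν) * (∫⁻ y, k y ∂ν) ^ (q - 1) := by
        rw [ENNReal.mul_rpow_of_nonneg _ _ hq_pos.le, ← ENNReal.rpow_mul, ← ENNReal.rpow_mul,
          one_div_mul_cancel hq_pos.ne', ENNReal.rpow_one, sub_mul, one_mul,
          one_div_mul_cancel hq_pos.ne']

lemma lintegral_rpow_lintegral_le_of_lintegral_rpow_le [SFinite μ] [SFinite ν]
    {f : α → β → ℝ≥0∞} (hf : Measurable (Function.uncurry f)) {k : β → ℝ≥0∞} (hk : Measurable k)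
    (hk_zero : ∀ y, k y ≠ 0) (hq : 1 ≤ q) (hfk : ∀ᵐ y ∂ν, ∫⁻ x, f x y ^ q ∂μ ≤ k y ^ q) :
    ∫⁻ x, (∫⁻ y, f x y ∂ν) ^ q ∂μ ≤ (∫⁻ y, k y ∂ν) ^ q := by
  obtain h_top | h_top := eq_or_ne (∫⁻ y, k y ∂ν) ∞
  · simp [h_top, ENNReal.top_rpow_of_pos (by linarith : 0 < q)]
  have hk_top : ∀ᵐ y ∂ν, k y ≠ ∞ := (ae_lt_top hk h_top).mono fun _ h ↦ h.ne
  have hg : Measurable (Function.uncurry fun x y ↦ f x y ^ q * k y ^ (1 - q)) :=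
    (hf.pow_const q).mul ((hk.comp measurable_snd).pow_const _)
  calc ∫⁻ x, (∫⁻ y, f x y ∂ν) ^ q ∂μ
      ≤ ∫⁻ x, (∫⁻ y, f x y ^ q * k y ^ (1 - q) ∂ν) * (∫⁻ y, k y ∂ν) ^ (q - 1) ∂μ :=
        lintegral_mono fun x ↦ rpow_lintegral_le_lintegral_rpow_mul_rpow
          hf.of_uncurry_left.aemeasurable hk.aemeasurable (ae_of_all _ hk_zero) hk_top hq
    _ = (∫⁻ y, ∫⁻ x, f x y ^ q * k y ^ (1 - q) ∂μ ∂ν) * (∫⁻ y, k y ∂ν) ^ (q - 1) := by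
        rw [lintegral_mul_const _ hg.lintegral_prod_right,
          lintegral_lintegral_swap hg.aemeasurable]
    _ ≤ (∫⁻ y, k y ∂ν) * (∫⁻ y, k y ∂ν) ^ (q - 1) := by
        gcongr ?_ * _
        refine lintegral_mono_ae ?_
        filter_upwards [hfk, hk_top] with y hy hy_top
        calc ∫⁻ x, f x y ^ q * k y ^ (1 - q) ∂μ
            = (∫⁻ x, f x y ^ q ∂μ) * k y ^ (1 - q) :=
              lintegral_mul_const _ (hf.of_uncurry_right.pow_const q)
          _ ≤ k y ^ q * k y ^ (1 - q) := by gcongr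
          _ = k y := by simp [← ENNReal.rpow_add _ _ (hk_zero y) hy_top]
    _ = (∫⁻ y, k y ∂ν) ^ q := by
        conv_lhs => enter [1]; rw [← ENNReal.rpow_one (∫⁻ y, k y ∂ν)]
        rw [← ENNReal.rpow_add_of_nonneg _ _ zero_le_one (by linarith), add_sub_cancel]

theorem lintegral_rpow_lintegral_rpow_inv_le [SFinite μ] [SigmaFinite ν] {f : α → β → ℝ≥0∞}
    (hf : Measurable (Function.uncurry f)) (hq : 1 ≤ q) :
    (∫⁻ x, (∫⁻ y, f x y ∂ν) ^ q ∂μ) ^ q⁻¹ ≤ ∫⁻ y, (∫⁻ x, f x y ^ q ∂μ) ^ q⁻¹ ∂ν := by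
  have hq_pos : 0 < q := by linarith
  have h_norm : Measurable fun y ↦ (∫⁻ x, f x y ^ q ∂μ) ^ q⁻¹ :=
    (hf.pow_const q).lintegral_prod_left.pow_const _
  -- The inner norm may vanish, so the weight is taken to be its sum with a small `w > 0`.
  refine ENNReal.le_of_forall_pos_le_add fun ε hε _ ↦ ?_
  obtain ⟨w, w_pos, hw, w_lt⟩ :=
    exists_pos_lintegral_lt_of_sigmaFinite ν (ENNReal.coe_ne_zero.2 hε.ne')
  rw [ENNReal.rpow_inv_le_iff hq_pos]
  calc ∫⁻ x, (∫⁻ y, f x y ∂ν) ^ q ∂μ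
      ≤ (∫⁻ y, (∫⁻ x, f x y ^ q ∂μ) ^ q⁻¹ + w y ∂ν) ^ q := by
        refine lintegral_rpow_lintegral_le_of_lintegral_rpow_le hf
          (h_norm.add hw.coe_nnreal_ennreal) (fun y ↦ by simp [(w_pos y).ne']) hq
          (ae_of_all _ fun y ↦ ?_)
        rw [← ENNReal.rpow_inv_le_iff hq_pos]
        exact le_self_add
    _ ≤ (∫⁻ y, (∫⁻ x, f x y ^ q ∂μ) ^ q⁻¹ ∂ν + ε) ^ q := by
        rw [lintegral_add_left h_norm]
        gcongr

theorem eLpNorm_integral_le_lintegral_eLpNorm [NormedSpace ℝ E] [SFinite μ] [SigmaFinite ν]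
    {f : α → β → E} (hf : StronglyMeasurable (Function.uncurry f)) {p : ℝ≥0∞} (hp : 1 ≤ p)
    (hp_top : p ≠ ∞) :
    eLpNorm (fun x ↦ ∫ y, f x y ∂ν) p μ ≤ ∫⁻ y, eLpNorm (f · y) p μ ∂ν := by
  have hp_zero : p ≠ 0 := (one_pos.trans_le hp).ne'
  simp only [eLpNorm_eq_lintegral_rpow_enorm_toReal hp_zero hp_top, one_div]
  calc (∫⁻ x, ‖∫ y, f x y ∂ν‖ₑ ^ p.toReal ∂μ) ^ p.toReal⁻¹
      ≤ (∫⁻ x, (∫⁻ y, ‖f x y‖ₑ ∂ν) ^ p.toReal ∂μ) ^ p.toReal⁻¹ := by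
        gcongr with x
        exact enorm_integral_le_lintegral_enorm _
    _ ≤ ∫⁻ y, (∫⁻ x, ‖f x y‖ₑ ^ p.toReal ∂μ) ^ p.toReal⁻¹ ∂ν :=
        lintegral_rpow_lintegral_rpow_inv_le hf.enorm (ENNReal.toReal_mono hp_top hp)

theorem eLpNorm_sub_le_lintegral_eLpNorm_deriv [NormedSpace ℝ E] [CompleteSpace E] [SFinite μ]
    {F F' : α → ℝ → E} {a b : ℝ} (hab : a ≤ b)
    (hF : ∀ x, ∀ t ∈ Icc a b, HasDerivAt (F x) (F' x t) t)
    (hF'_cont : ∀ x, ContinuousOn (F' x) (Icc a b))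
    (hF' : StronglyMeasurable (Function.uncurry F')) {p : ℝ≥0∞} (hp : 1 ≤ p) (hp_top : p ≠ ∞) :
    eLpNorm (fun x ↦ F x b - F x a) p μ ≤ ∫⁻ t in Ioc a b, eLpNorm (F' · t) p μ := by
  have ftc (x : α) : F x b - F x a = ∫ t in Ioc a b, F' x t := by
    rw [← intervalIntegral.integral_of_le hab, intervalIntegral.integral_eq_sub_of_hasDerivAt]
    · simpa only [uIcc_of_le hab] using hF x
    · exact (hF'_cont x).intervalIntegrable_of_Icc hab
  simp only [ftc]
  exact eLpNorm_integral_le_lintegral_eLpNorm hF' hp hp_top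

end MinkowskiIntegral

section GaussianMoments

lemma Gamma_add_one_half_le {t : ℝ} (ht : 1 ≤ t) :
    Real.Gamma (t + 1 / 2) ≤ √Real.pi * (t - 1 / 2) ^ t := by
  have h_pos : 0 < t - 1 / 2 := by linarith
  have h_Gamma : 0 < Real.Gamma (t + 1 / 2) := Real.Gamma_pos_of_pos (by linarith)
  have h_rec : Real.log (Real.Gamma (t + 1 / 2)) =
      Real.log (t - 1 / 2) + Real.log (Real.Gamma (t - 1 / 2)) := by
    rw [← Real.log_mul h_pos.ne' (Real.Gamma_pos_of_pos h_pos).ne', ← Real.Gamma_add_one h_pos.ne']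
    ring_nf
  -- `log ∘ Γ` is convex, and `t - 1 / 2` is a convex combination of `1 / 2` and `t + 1 / 2`.
  have h_convex : Real.log (Real.Gamma (t - 1 / 2)) ≤
      1 / t * Real.log √Real.pi + (1 - 1 / t) * Real.log (Real.Gamma (t + 1 / 2)) := by
    have h := Real.convexOn_log_Gamma.2 (show (1 / 2 : ℝ) ∈ Ioi 0 by norm_num)
      (show t + 1 / 2 ∈ Ioi 0 by exact mem_Ioi.2 (by linarith)) (show 0 ≤ 1 / t by positivity)
      (sub_nonneg.2 ((div_le_one (by linarith)).2 ht)) (add_sub_cancel _ _)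
    have h_point : 1 / t * (1 / 2) + (1 - 1 / t) * (t + 1 / 2) = t - 1 / 2 := by field_simp; ring
    simpa only [smul_eq_mul, Function.comp_apply, h_point, Real.Gamma_one_half_eq] using h
  rw [← Real.log_le_log_iff h_Gamma (by positivity), Real.log_mul (by positivity) (by positivity),
    Real.log_rpow h_pos]
  calc Real.log (Real.Gamma (t + 1 / 2))
      = t * (Real.log (Real.Gamma (t + 1 / 2)) -
          (1 - 1 / t) * Real.log (Real.Gamma (t + 1 / 2))) := by field_simp; ring
    _ ≤ t * (Real.log (t - 1 / 2) + 1 / t * Real.log √Real.pi) := by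
        gcongr
        linarith
    _ = Real.log √Real.pi + t * Real.log (t - 1 / 2) := by field_simp; ring

theorem integral_abs_sub_rpow_gaussianReal (m : ℝ) {v : ℝ≥0} (hv : v ≠ 0) {q : ℝ} (hq : -1 < q) :
    ∫ x, |x - m| ^ q ∂(gaussianReal m v) =
      (2 * v) ^ (q / 2) * Real.Gamma ((q + 1) / 2) / √Real.pi := by
  set c : ℝ := (√(2 * Real.pi * v))⁻¹
  set g : ℝ → ℝ := fun x ↦ c * (x ^ q * Real.exp (-(2 * (v : ℝ))⁻¹ * x ^ (2 : ℝ)))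
  have h_density (x : ℝ) : gaussianPDFReal m v x • |x - m| ^ q = g |x - m| := by
    simp only [c, g, gaussianPDFReal, smul_eq_mul, Real.rpow_two, sq_abs]
    ring_nf
  calc ∫ x, |x - m| ^ q ∂(gaussianReal m v)
      = ∫ x, g |x - m| := by simp only [integral_gaussianReal_eq_integral_smul hv, h_density]
    _ = ∫ x, g |x| := integral_sub_right_eq_self (fun x ↦ g |x|) m
    _ = 2 * ∫ x in Ioi 0, g x := integral_comp_abs
    _ = (2 * v) ^ (q / 2) * Real.Gamma ((q + 1) / 2) / √Real.pi := by
        have h_pow : ((2 * v : ℝ)⁻¹) ^ (-(q + 1) / 2) = (2 * v) ^ (q / 2) * √(2 * v) := by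
          rw [Real.inv_rpow (by positivity), ← Real.rpow_neg (by positivity), Real.sqrt_eq_rpow,
            ← Real.rpow_add (by positivity)]
          ring_nf
        have h_sqrt : √(2 * Real.pi * v) = √(2 * v) * √Real.pi := by
          rw [← Real.sqrt_mul (by positivity)]
          ring_nf
        rw [integral_const_mul, integral_rpow_mul_exp_neg_mul_rpow two_pos hq (by positivity),
          h_pow]
        simp only [c, h_sqrt]
        field_simp

theorem eLpNorm_sub_mean_gaussianReal_le (m : ℝ) (v : ℝ≥0) {q : ℝ} (hq : 2 ≤ q) :
    eLpNorm (fun x ↦ x - m) (ENNReal.ofReal q) (gaussianReal m v) ≤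
      ENNReal.ofReal √((q - 1) * v) := by
  have hq_pos : 0 < q := by linarith
  obtain rfl | hv := eq_or_ne v 0
  · simp [gaussianReal_zero_var, eLpNorm_dirac _ _ (ENNReal.ofReal_pos.2 hq_pos).ne']
  have h_memLp : MemLp (fun x ↦ x - m) (ENNReal.ofReal q) (gaussianReal m v) :=
    (memLp_id_gaussianReal' _ ENNReal.ofReal_ne_top).sub (memLp_const m)
  have h_moment : ∫ x, |x - m| ^ q ∂(gaussianReal m v) ≤ √((q - 1) * v) ^ q :=
    calc ∫ x, |x - m| ^ q ∂(gaussianReal m v)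
        = (2 * v) ^ (q / 2) * Real.Gamma (q / 2 + 1 / 2) / √Real.pi := by
          rw [integral_abs_sub_rpow_gaussianReal m hv (by linarith), add_div]
      _ ≤ (2 * v) ^ (q / 2) * (√Real.pi * (q / 2 - 1 / 2) ^ (q / 2)) / √Real.pi := by
          gcongr
          exact Gamma_add_one_half_le (by linarith)
      _ = (2 * v * (q / 2 - 1 / 2)) ^ (q / 2) := by
          rw [Real.mul_rpow (x := 2 * (v : ℝ)) (by positivity) (by linarith), mul_left_comm,
            mul_div_cancel_left₀ _ (by positivity)]
      _ = √((q - 1) * v) ^ q := by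
          rw [Real.sqrt_eq_rpow, ← Real.rpow_mul (mul_nonneg (by linarith) v.coe_nonneg)]
          ring_nf
  rw [h_memLp.eLpNorm_eq_integral_rpow_norm (by simpa using hq_pos) ENNReal.ofReal_ne_top,
    ENNReal.toReal_ofReal hq_pos.le]
  refine ENNReal.ofReal_le_ofReal ?_
  rw [Real.rpow_inv_le_iff_of_pos (by positivity) (by positivity) hq_pos]
  exact h_moment

theorem eLpNorm_sub_const_gaussianReal_le (m c : ℝ) (v : ℝ≥0) {q : ℝ} (hq : 2 ≤ q) :
    eLpNorm (fun x ↦ x - c) (ENNReal.ofReal q) (gaussianReal m v) ≤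
      ENNReal.ofReal (√((q - 1) * v) + |m - c|) := by
  calc eLpNorm (fun x ↦ x - c) (ENNReal.ofReal q) (gaussianReal m v)
      = eLpNorm ((fun x ↦ x - m) + fun _ ↦ m - c) (ENNReal.ofReal q) (gaussianReal m v) := by
        congr with x
        simp
    _ ≤ eLpNorm (fun x ↦ x - m) (ENNReal.ofReal q) (gaussianReal m v) +
          eLpNorm (fun _ ↦ m - c) (ENNReal.ofReal q) (gaussianReal m v) :=
        eLpNorm_add_le (by fun_prop) (by fun_prop) (ENNReal.one_le_ofReal.2 (by linarith))
    _ ≤ ENNReal.ofReal √((q - 1) * v) + ENNReal.ofReal |m - c| := by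
        gcongr
        · exact eLpNorm_sub_mean_gaussianReal_le m v hq
        · simp [eLpNorm_const _ (ENNReal.ofReal_pos.2 (by linarith : 0 < q)).ne'
            (NeZero.ne (gaussianReal m v)), Real.enorm_eq_ofReal_abs]
    _ = ENNReal.ofReal (√((q - 1) * v) + |m - c|) :=
        (ENNReal.ofReal_add (by positivity) (by positivity)).symm

end GaussianMoments

section ExponentialTilting

theorem withDensity_exp_mul_gaussianReal (m : ℝ) (v : ℝ≥0) (t : ℝ) :
    (gaussianReal m v).withDensity (fun x ↦ ENNReal.ofReal (Real.exp (t * x))) =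
      ENNReal.ofReal (Real.exp (t * m + v * t ^ 2 / 2)) • gaussianReal (m + v * t) v := by
  obtain rfl | hv := eq_or_ne v 0
  · simp [gaussianReal_zero_var, dirac_withDensity]
  rw [gaussianReal_of_var_ne_zero _ hv, gaussianReal_of_var_ne_zero _ hv,
    ← withDensity_mul _ (measurable_gaussianPDF m v) (by fun_prop),
    ← withDensity_smul _ (measurable_gaussianPDF _ v)]
  congr 1 with x
  have hv_real : (v : ℝ) ≠ 0 := by exact_mod_cast hv
  have h_exp : Real.exp (-(x - m) ^ 2 / (2 * v)) * Real.exp (t * x) =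
      Real.exp (t * m + v * t ^ 2 / 2) * Real.exp (-(x - (m + v * t)) ^ 2 / (2 * v)) := by
    rw [← Real.exp_add, ← Real.exp_add]
    congr 1
    field_simp
    ring
  simp only [Pi.mul_apply, Pi.smul_apply, smul_eq_mul, gaussianPDF, gaussianPDFReal]
  rw [← ENNReal.ofReal_mul (by positivity), ← ENNReal.ofReal_mul (by positivity), mul_assoc,
    h_exp, mul_left_comm]

theorem eLpNorm_exp_smul_gaussianReal {E : Type*} [NormedAddCommGroup E] [NormedSpace ℝ E]
    (m : ℝ) (v : ℝ≥0) (t : ℝ) (f : ℝ → E) {q : ℝ} (hq : 0 < q) :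
    eLpNorm (fun x ↦ Real.exp (t * x) • f x) (ENNReal.ofReal q) (gaussianReal m v) =
      ENNReal.ofReal (Real.exp (t * m + q * v * t ^ 2 / 2)) *
        eLpNorm f (ENNReal.ofReal q) (gaussianReal (m + q * v * t) v) := by
  have h_enorm (x : ℝ) : ‖Real.exp (t * x) • f x‖ₑ ^ q =
      ENNReal.ofReal (Real.exp (q * t * x)) * ‖f x‖ₑ ^ q := by
    rw [enorm_smul, ENNReal.mul_rpow_of_nonneg _ _ hq.le, Real.enorm_of_nonneg (by positivity),
      ENNReal.ofReal_rpow_of_pos (by positivity), ← Real.exp_mul]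
    ring_nf
  have h_lintegral : ∫⁻ x, ‖Real.exp (t * x) • f x‖ₑ ^ q ∂(gaussianReal m v) =
      ENNReal.ofReal (Real.exp (t * m + q * v * t ^ 2 / 2)) ^ q *
        ∫⁻ x, ‖f x‖ₑ ^ q ∂(gaussianReal (m + q * v * t) v) := by
    calc ∫⁻ x, ‖Real.exp (t * x) • f x‖ₑ ^ q ∂(gaussianReal m v)
        = ∫⁻ x, ‖f x‖ₑ ^ q ∂(gaussianReal m v).withDensity
            (fun x ↦ ENNReal.ofReal (Real.exp (q * t * x))) := by
          simp only [h_enorm]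
          exact (lintegral_withDensity_eq_lintegral_mul_non_measurable _ (by fun_prop)
            (ae_of_all _ fun _ ↦ ENNReal.ofReal_lt_top) _).symm
      _ = ENNReal.ofReal (Real.exp (t * m + q * v * t ^ 2 / 2)) ^ q *
            ∫⁻ x, ‖f x‖ₑ ^ q ∂(gaussianReal (m + q * v * t) v) := by
          rw [withDensity_exp_mul_gaussianReal, lintegral_smul_measure, smul_eq_mul,
            ENNReal.ofReal_rpow_of_pos (by positivity), ← Real.exp_mul]
          ring_nf
  rw [eLpNorm_eq_lintegral_rpow_enorm_toReal (by simpa using hq) ENNReal.ofReal_ne_top,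
    eLpNorm_eq_lintegral_rpow_enorm_toReal (by simpa using hq) ENNReal.ofReal_ne_top,
    ENNReal.toReal_ofReal hq.le, h_lintegral, ENNReal.mul_rpow_of_nonneg _ _ (by positivity),
    ← ENNReal.rpow_mul, mul_one_div_cancel hq.ne', ENNReal.rpow_one]

end ExponentialTilting

section ExponentialMartingale

theorem hasDerivAt_exp_mul_sub_sq_div_two (z s : ℝ) :
    HasDerivAt (fun s ↦ Real.exp (s * z - s ^ 2 / 2))
      (Real.exp (s * z - s ^ 2 / 2) * (z - s)) s := by
  have h := ((hasDerivAt_id s).mul_const z).sub ((hasDerivAt_pow 2 s).div_const 2)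
  simpa using h.exp

theorem eLpNorm_exp_mul_sub_gaussianReal_le {q s : ℝ} (hq : 2 ≤ q) (hs : 0 ≤ s) :
    eLpNorm (fun z ↦ Real.exp (s * z - s ^ 2 / 2) * (z - s)) (ENNReal.ofReal q)
        (gaussianReal 0 1) ≤
      ENNReal.ofReal (Real.exp ((q - 1) * s ^ 2 / 2) * (√(q - 1) + (q - 1) * s)) := by
  have h_split (z : ℝ) : Real.exp (s * z - s ^ 2 / 2) * (z - s) =
      Real.exp (s * z) • (Real.exp (-s ^ 2 / 2) • (z - s)) := by
    rw [smul_eq_mul, smul_eq_mul, ← mul_assoc, ← Real.exp_add]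
    ring_nf
  have h_shift : |q * s - s| = (q - 1) * s := by
    rw [← sub_one_mul, abs_of_nonneg (mul_nonneg (by linarith) hs)]
  simp only [h_split]
  calc eLpNorm (fun z ↦ Real.exp (s * z) • (Real.exp (-s ^ 2 / 2) • (z - s))) (ENNReal.ofReal q)
        (gaussianReal 0 1)
      = ENNReal.ofReal (Real.exp (q * s ^ 2 / 2)) * (ENNReal.ofReal (Real.exp (-s ^ 2 / 2)) *
          eLpNorm (fun z ↦ z - s) (ENNReal.ofReal q) (gaussianReal (q * s) 1)) := by
        rw [eLpNorm_exp_smul_gaussianReal 0 1 s _ (by linarith),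
          ← Real.enorm_of_nonneg (Real.exp_pos (-s ^ 2 / 2)).le, ← eLpNorm_const_smul]
        simp [Pi.smul_def]
    _ ≤ ENNReal.ofReal (Real.exp (q * s ^ 2 / 2)) * (ENNReal.ofReal (Real.exp (-s ^ 2 / 2)) *
          ENNReal.ofReal (√(q - 1) + (q - 1) * s)) := by
        gcongr
        simpa [h_shift] using eLpNorm_sub_const_gaussianReal_le (q * s) s 1 hq
    _ = ENNReal.ofReal (Real.exp ((q - 1) * s ^ 2 / 2) * (√(q - 1) + (q - 1) * s)) := by
        rw [← ENNReal.ofReal_mul (by positivity), ← ENNReal.ofReal_mul (by positivity), ← mul_assoc,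
          ← Real.exp_add]
        ring_nf

end ExponentialMartingale

section Majorant

theorem one_add_le_sqrt_two_mul_log_two_mul (u : ℝ) :
    1 + u ≤ √(2 * Real.log 2) * (1 + 2 * u ^ 2) := by
  have h_const : 9 / 8 ≤ √(2 * Real.log 2) :=
    Real.le_sqrt_of_sq_le (by linarith [Real.log_two_gt_d9])
  calc 1 + u ≤ 9 / 8 * (1 + 2 * u ^ 2) := by linarith [sq_nonneg (u - 2 / 9)]
    _ ≤ √(2 * Real.log 2) * (1 + 2 * u ^ 2) := by gcongr

theorem exp_mul_sqrt_add_mul_le {c s : ℝ} (hc : 0 ≤ c) :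
    Real.exp (c * s ^ 2 / 2) * (√c + c * s) ≤
      √(2 * Real.log 2) * √c * (Real.exp (c * s ^ 2) * (1 + 2 * c * s ^ 2)) := by
  have h_sq : √c ^ 2 = c := Real.sq_sqrt hc
  calc Real.exp (c * s ^ 2 / 2) * (√c + c * s)
      = Real.exp (c * s ^ 2 / 2) * (√c * (1 + √c * s)) := by
        linear_combination -Real.exp (c * s ^ 2 / 2) * s * h_sq
    _ ≤ Real.exp (c * s ^ 2 / 2) * (√c * (√(2 * Real.log 2) * (1 + 2 * (√c * s) ^ 2))) := by
        gcongr
        exact one_add_le_sqrt_two_mul_log_two_mul _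
    _ ≤ Real.exp (c * s ^ 2) * (√c * (√(2 * Real.log 2) * (1 + 2 * (√c * s) ^ 2))) := by
        gcongr
        exact half_le_self (by positivity)
    _ = √(2 * Real.log 2) * √c * (Real.exp (c * s ^ 2) * (1 + 2 * c * s ^ 2)) := by
        rw [mul_pow, h_sq]
        ring

theorem integral_exp_mul_sq_mul (a b c : ℝ) :
    ∫ s in a..b, Real.exp (c * s ^ 2) * (1 + 2 * c * s ^ 2) =
      b * Real.exp (c * b ^ 2) - a * Real.exp (c * a ^ 2) := by
  refine intervalIntegral.integral_eq_sub_of_hasDerivAt (f := fun s ↦ s * Real.exp (c * s ^ 2))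
    (fun s _ ↦ ?_) (Continuous.intervalIntegrable (by fun_prop) a b)
  convert! (hasDerivAt_id s).mul ((hasDerivAt_pow 2 s).const_mul c).exp using 1
  simp
  ring

theorem setLIntegral_Ioc_ofReal_exp_mul_sq_mul {A c l : ℝ} (hA : 0 ≤ A) (hc : 0 ≤ c) (hl : 0 ≤ l) :
    ∫⁻ s in Ioc 0 l, ENNReal.ofReal (A * (Real.exp (c * s ^ 2) * (1 + 2 * c * s ^ 2))) =
      ENNReal.ofReal (A * (l * Real.exp (c * l ^ 2))) := by
  rw [← ofReal_integral_eq_lintegral_ofReal, ← intervalIntegral.integral_of_le hl,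
    intervalIntegral.integral_const_mul, integral_exp_mul_sq_mul, zero_mul, sub_zero]
  · exact (Continuous.intervalIntegrable (by fun_prop) 0 l).1
  · exact ae_of_all _ fun s ↦ by positivity

end Majorant

/-- **An estimate on the log-normal distribution.** If `Z` is standard normal and
`q ∈ [2,∞)`, then for all `λ ≥ 0`,
`‖e^{λZ - λ²/2} - 1‖_{L^q} ≤ √(2 log 2) √(q-1) λ e^{(q-1)λ²}`. -/
theorem lognormal_Lq_estimate
    {Ω : Type*} [MeasurableSpace Ω] (P : Measure Ω) [IsProbabilityMeasure P]
    (Z : Ω → ℝ) (hZ : Measure.map Z P = gaussianReal 0 1)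
    (q : ℝ) (hq : 2 ≤ q) (l : ℝ) (hl : 0 ≤ l) :
    eLpNorm (fun ω => Real.exp (l * Z ω - l ^ 2 / 2) - 1) (ENNReal.ofReal q) P
      ≤ ENNReal.ofReal
        (Real.sqrt (2 * Real.log 2) * Real.sqrt (q - 1) * l * Real.exp ((q - 1) * l ^ 2)) := by
  have hZ_meas : AEMeasurable Z P := AEMeasurable.of_map_ne_zero (hZ ▸ NeZero.ne _)
  calc eLpNorm (fun ω ↦ Real.exp (l * Z ω - l ^ 2 / 2) - 1) (ENNReal.ofReal q) P
      = eLpNorm (fun z ↦ Real.exp (l * z - l ^ 2 / 2) - 1) (ENNReal.ofReal q)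
          (gaussianReal 0 1) := by
        rw [← hZ, eLpNorm_map_measure (by fun_prop) hZ_meas, Function.comp_def]
    _ ≤ ∫⁻ s in Ioc 0 l, eLpNorm (fun z ↦ Real.exp (s * z - s ^ 2 / 2) * (z - s))
          (ENNReal.ofReal q) (gaussianReal 0 1) := by
        simpa using eLpNorm_sub_le_lintegral_eLpNorm_deriv hl
          (fun z s _ ↦ hasDerivAt_exp_mul_sub_sq_div_two z s) (by fun_prop)
          (by unfold Function.uncurry; fun_prop)
          (ENNReal.one_le_ofReal.2 (by linarith)) ENNReal.ofReal_ne_top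
    _ ≤ ∫⁻ s in Ioc 0 l, ENNReal.ofReal (√(2 * Real.log 2) * √(q - 1) *
          (Real.exp ((q - 1) * s ^ 2) * (1 + 2 * (q - 1) * s ^ 2))) :=
        setLIntegral_mono' measurableSet_Ioc fun s hs ↦
          (eLpNorm_exp_mul_sub_gaussianReal_le hq hs.1.le).trans
            (ENNReal.ofReal_le_ofReal (exp_mul_sqrt_add_mul_le (by linarith)))
    _ = ENNReal.ofReal (√(2 * Real.log 2) * √(q - 1) * l * Real.exp ((q - 1) * l ^ 2)) := by
        rw [setLIntegral_Ioc_ofReal_exp_mul_sq_mul (by positivity) (by linarith) hl, ← mul_assoc]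

end
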